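/- arXiv:1412.3782 — 3 statements merged into one kernel-verified Lean document; each statement's English description precedes it below -/
import Mathlib

section
/- Let R(x) = y_0''(x) + 6·y_0(x)² - x. For all real numbers α, β with |α| ≤ 9.22×10^{-9} and |β| ≤ 9.76×10^{-7}, the function E_0(x) = α·(x - x_0)^4 + β·(x - x_0)^{-3} + (1/7)·(x - x_0)^4·∫_{L_0}^x (t - x_0)^{-3}·R(t) dt - (1/7)·(x - x_0)^{-3}·∫_{L_0}^x (t - x_0)^4·R(t) dt satisfies sup_{x∈[x_0+r, L_0]} (x - x_0)^{16/5}·|E_0(x)| ≤ 2.04×10^{-6} and sup_{x∈[x_0+r, L_0]} |E_0'(x)| ≤ 1.23×10^{-5}. -/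
/-! Write `s = x - x₀`, so that `y₀ = -1/s² + p` with `p = Pu ∘ τP1` a polynomial. The poles
cancel in the remainder: `s³ R = s³ (p'' + 6 p² - x) - 12 s p` is a polynomial of degree 47 in `s`.
The first ingredient is the pointwise bound `|R| ≤ A s⁻³` with `A = 2.9·10⁻⁸` for
`s ∈ [7/10, 379/200]`, an interval that contains `[r, L₀ - x₀]` (`abs_RP1_le`). To obtain it, the
interval is cut into five pieces; on each one `s³ R` is rewritten exactly, over `ℚ`, as a polynomial
in the variable `u ∈ [-1, 1]` of that piece, and the sum of the absolute values of its coefficients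
is at most `A`. The coefficients are computed with polynomials represented by lists of rationals.

The second ingredient is variation of constants. With `s₁ = L₀ - x₀`, the bound on `R` gives
`|∫_{L₀}^x s⁻³ R| ≤ (A/5) s⁻⁵` and `|∫_{L₀}^x s⁴ R| ≤ (A/2) (s₁² - s²)` (`abs_int1_le`,
`abs_int2_le`). In `E₀'` the contributions of the derivatives of the two integrals cancel, so `E₀'`
involves the same two integrals (`hasDerivAt_E₀`). What remains are two inequalities in the single
variable `s ∈ [7/10, s₁]`: the bound on `s^(16/5) |E₀|` is tightest at `s = s₁`, the one on
`|E₀'|` at `s = 7/10`. -/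


open Set

noncomputable section

/-- The coefficients `c_0, …, c_22` of the polynomial `P_u`. -/
def cP : ℕ → ℝ
  | 0 => 335867/539062
  | 1 => 419712/989125
  | 2 => -352463/3539236
  | 3 => 60789/1703279
  | 4 => -132842/11825541
  | 5 => 43961/54574472
  | 6 => 39599/12036926
  | 7 => -213665/48625258
  | 8 => 61644/14973337
  | 9 => -107283/33444500
  | 10 => 44761/18892011
  | 11 => -28249/13550715
  | 12 => 20641/14839893
  | 13 => 13459/92774551
  | 14 => -4992/34838093
  | 15 => -11771/8149937
  | 16 => 24115/27631671
  | 17 => 42106/39550107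
  | 18 => -21163/32637441
  | 19 => -9782/15918509
  | 20 => 11581/32652169
  | 21 => 14692/88640147
  | 22 => -12278/123249611
  | _ => 0

/-- The polynomial `P_u(t) = Σ_{k=0}^{22} c_k t^k`. -/
def Pu (t : ℝ) : ℝ := ∑ k ∈ Finset.range 23, cP k * t ^ k

def x₀ : ℝ := -770766/323285
def rP1 : ℝ := 7/10
def LP1 : ℝ := 11/2
def L₀ : ℝ := -49/100

/-- `τ(x) = (x - (L + x₀ + r)/2)/((L - x₀ - r)/2)`, mapping `[x₀+r, L]` onto `[-1,1]`. -/
def τP1 (x : ℝ) : ℝ := (x - (LP1 + x₀ + rP1) / 2) / ((LP1 - x₀ - rP1) / 2)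

/-- `y₀(x) = -1/(x-x₀)² + P_u(τ(x))` on `[x₀+r, L]`. -/
def y₀ (x : ℝ) : ℝ := -1 / (x - x₀) ^ 2 + Pu (τP1 x)

/-- The remainder `R(x) = y₀''(x) + 6 y₀(x)² - x`. -/
def RP1 (x : ℝ) : ℝ := deriv (deriv y₀) x + 6 * (y₀ x) ^ 2 - x

/-- `E₀(x) = α(x-x₀)⁴ + β(x-x₀)⁻³ + (1/7)(x-x₀)⁴ ∫_{L₀}^x (t-x₀)⁻³ R(t) dt
  - (1/7)(x-x₀)⁻³ ∫_{L₀}^x (t-x₀)⁴ R(t) dt`. -/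
def E₀ (α β : ℝ) (x : ℝ) : ℝ :=
  α * (x - x₀) ^ 4 + β * (x - x₀) ^ (-3 : ℤ) +
    (1 / 7) * (x - x₀) ^ 4 * (∫ t in L₀..x, (t - x₀) ^ (-3 : ℤ) * RP1 t) -
    (1 / 7) * (x - x₀) ^ (-3 : ℤ) * (∫ t in L₀..x, (t - x₀) ^ 4 * RP1 t)

/-! ### Polynomials as lists of rational coefficients -/

/-- A polynomial with rational coefficients, given by the list of its coefficients in increasing
degree. Trailing zeros are allowed; only the values of `CPoly.ev` matter. -/
abbrev CPoly := List ℚ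

namespace CPoly

/-- Evaluation at a real number (Horner's scheme). -/
def ev : CPoly → ℝ → ℝ
  | [], _ => 0
  | a :: l, t => (a : ℝ) + t * ev l t

/-- Sum of polynomials. -/
def add : CPoly → CPoly → CPoly
  | [], q => q
  | p, [] => p
  | a :: p, b :: q => (a + b) :: add p q

/-- Multiplication of a polynomial by a scalar. -/
def smul (k : ℚ) : CPoly → CPoly
  | [] => []
  | a :: p => (k * a) :: smul k p

/-- Product of polynomials. -/
def mul : CPoly → CPoly → CPoly
  | [], _ => []
  | a :: p, q => add (smul a q) (0 :: mul p q)

/-- The composition `p ∘ q`. -/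
def comp : CPoly → CPoly → CPoly
  | [], _ => []
  | a :: p, q => add [a] (mul q (comp p q))

/-- The derivative, from `(a + t p)' = p + t p'`. -/
def der : CPoly → CPoly
  | [] => []
  | _ :: p => add p (0 :: der p)

/-- The sum of the absolute values of the coefficients. -/
def norm1 : CPoly → ℚ
  | [] => 0
  | a :: p => |a| + norm1 p

lemma ev_add (p q : CPoly) (t : ℝ) : ev (add p q) t = ev p t + ev q t := by
  induction p generalizing q with
  | nil => simp [add, ev]
  | cons a p ih =>
    cases q with
    | nil => simp [add, ev]
    | cons b q => simp only [add, ev, ih]; push_cast; ring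

lemma ev_smul (k : ℚ) (p : CPoly) (t : ℝ) : ev (smul k p) t = k * ev p t := by
  induction p with
  | nil => simp [smul, ev]
  | cons a p ih => simp only [smul, ev, ih]; push_cast; ring

lemma ev_mul (p q : CPoly) (t : ℝ) : ev (mul p q) t = ev p t * ev q t := by
  induction p with
  | nil => simp [mul, ev]
  | cons a p ih => simp only [mul, ev, ev_add, ev_smul, ih]; push_cast; ring

lemma ev_comp (p q : CPoly) (t : ℝ) : ev (comp p q) t = ev p (ev q t) := by
  induction p with
  | nil => simp [comp, ev]
  | cons a p ih => simp only [comp, ev, ev_add, ev_mul, ih]; ring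

lemma hasDerivAt_ev (p : CPoly) (t : ℝ) : HasDerivAt (ev p) (ev (der p) t) t := by
  induction p with
  | nil => exact hasDerivAt_const t 0
  | cons a p ih =>
    have h := ((hasDerivAt_id t).mul ih).const_add (a : ℝ)
    refine h.congr_deriv ?_
    simp only [der, ev_add, ev, id]
    push_cast
    ring

lemma continuous_ev (p : CPoly) : Continuous (ev p) :=
  continuous_iff_continuousAt.2 fun t => (hasDerivAt_ev p t).continuousAt

lemma abs_ev_le (p : CPoly) {t : ℝ} (ht : |t| ≤ 1) : |ev p t| ≤ norm1 p := by
  induction p with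
  | nil => simp [ev, norm1]
  | cons a p ih =>
    simp only [ev, norm1]
    push_cast
    have h : |t * ev p t| ≤ |ev p t| := by
      rw [abs_mul]
      exact mul_le_of_le_one_left (abs_nonneg _) ht
    linarith [abs_add_le (a : ℝ) (t * ev p t)]

end CPoly

open CPoly

/-! ### The remainder -/

/-- The coefficients of `Pu`. -/
def cL : CPoly :=
  [335867/539062, 419712/989125, -352463/3539236, 60789/1703279, -132842/11825541,
   43961/54574472, 39599/12036926, -213665/48625258, 61644/14973337, -107283/33444500,
   44761/18892011, -28249/13550715, 20641/14839893, 13459/92774551, -4992/34838093,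
   -11771/8149937, 24115/27631671, 42106/39550107, -21163/32637441, -9782/15918509,
   11581/32652169, 14692/88640147, -12278/123249611]

/-- Half the length of `[x₀ + r, L]`, which is the inverse of the slope of `τP1`. -/
def hQ : ℚ := (11/2 + 770766/323285 - 7/10) / 2

/-- The polynomial `s³ R(x₀ + s)`, in the variable `u` with `s = a + w u`. -/
def resid (a w : ℚ) : CPoly :=
  let s : CPoly := [a, w]
  let τ : CPoly := [(a - 7/10) / hQ - 1, w / hQ]
  let p := comp cL τ
  let p2 := smul (1 / hQ ^ 2) (comp (der (der cL)) τ)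
  let x : CPoly := [a - 770766/323285, w]
  mul s (add (mul (mul s s) (add p2 (add (smul 6 (mul p p)) (smul (-1) x)))) (smul (-12) p))

lemma Pu_eq (t : ℝ) : Pu t = ev cL t := by
  simp only [Pu, Finset.sum_range_succ, Finset.sum_range_zero, cP, cL, ev]
  push_cast
  ring

lemma τP1_eq (x : ℝ) : τP1 x = (x - x₀ - 7/10) / hQ - 1 := by
  simp only [τP1, LP1, x₀, rP1, hQ]
  push_cast
  ring

lemma hasDerivAt_τP1 (x : ℝ) : HasDerivAt τP1 (1 / (hQ : ℝ)) x := by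
  have h : HasDerivAt (fun x => (x - x₀ - 7/10) / (hQ : ℝ) - 1) (1 / (hQ : ℝ)) x :=
    ((((hasDerivAt_id x).sub_const x₀).sub_const (7/10)).div_const (hQ : ℝ)).sub_const 1
  rwa [← funext τP1_eq] at h

lemma hasDerivAt_ev_τP1 (p : CPoly) (x : ℝ) :
    HasDerivAt (fun x => ev p (τP1 x)) (ev (der p) (τP1 x) * (1 / (hQ : ℝ))) x :=
  (hasDerivAt_ev p (τP1 x)).comp x (hasDerivAt_τP1 x)

lemma hasDerivAt_y₀ {x : ℝ} (hx : x₀ < x) :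
    HasDerivAt y₀ (2 / (x - x₀) ^ 3 + ev (der cL) (τP1 x) * (1 / (hQ : ℝ))) x := by
  have hs : x - x₀ ≠ 0 := (sub_pos.2 hx).ne'
  have h1 := (((hasDerivAt_id x).sub_const x₀).pow 2).inv (pow_ne_zero 2 hs)
  have h2 := h1.neg.add (hasDerivAt_ev_τP1 cL x)
  have e : y₀ = fun x => -((x - x₀) ^ 2)⁻¹ + ev cL (τP1 x) := by
    funext x
    rw [y₀, Pu_eq, neg_div, one_div]
  rw [e]
  refine h2.congr_deriv ?_
  simp only [id, Pi.pow_apply]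
  field_simp
  norm_num
  ring

lemma hasDerivAt_deriv_y₀ {x : ℝ} (hx : x₀ < x) :
    HasDerivAt (deriv y₀)
      (-6 / (x - x₀) ^ 4 + ev (der (der cL)) (τP1 x) * (1 / (hQ : ℝ)) ^ 2) x := by
  have hs : x - x₀ ≠ 0 := (sub_pos.2 hx).ne'
  have h1 := ((((hasDerivAt_id x).sub_const x₀).pow 3).inv (pow_ne_zero 3 hs)).const_mul 2
  have h2 := h1.add ((hasDerivAt_ev_τP1 (der cL) x).mul_const (1 / (hQ : ℝ)))
  have e : deriv y₀ =ᶠ[nhds x]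
      fun x => 2 * ((x - x₀) ^ 3)⁻¹ + ev (der cL) (τP1 x) * (1 / (hQ : ℝ)) := by
    filter_upwards [Ioi_mem_nhds hx] with z hz
    rw [(hasDerivAt_y₀ hz).deriv, div_eq_mul_inv]
  refine HasDerivAt.congr_of_eventuallyEq ?_ e
  refine h2.congr_deriv ?_
  simp only [id, Pi.pow_apply]
  field_simp
  norm_num
  ring

lemma RP1_eq {x : ℝ} (hx : x₀ < x) :
    RP1 x = -6 / (x - x₀) ^ 4 + ev (der (der cL)) (τP1 x) * (1 / (hQ : ℝ)) ^ 2 +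
      6 * (-1 / (x - x₀) ^ 2 + ev cL (τP1 x)) ^ 2 - x := by
  rw [RP1, (hasDerivAt_deriv_y₀ hx).deriv, y₀, Pu_eq]

lemma continuousOn_RP1 : ContinuousOn RP1 (Ioi x₀) := by
  have hτ : Continuous τP1 :=
    continuous_iff_continuousAt.2 fun x => (hasDerivAt_τP1 x).continuousAt
  have h1 := (continuous_ev cL).comp hτ
  have h2 := (continuous_ev (der (der cL))).comp hτ
  have h : ContinuousOn (fun x => -6 / (x - x₀) ^ 4 +
      (ev (der (der cL)) ∘ τP1) x * (1 / (hQ : ℝ)) ^ 2 +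
      6 * (-1 / (x - x₀) ^ 2 + (ev cL ∘ τP1) x) ^ 2 - x) (Ioi x₀) := by
    have hs : ∀ n : ℕ, ∀ x ∈ Ioi x₀, (x - x₀) ^ n ≠ 0 :=
      fun n x hx => pow_ne_zero n (sub_pos.2 hx).ne'
    have hc : ∀ n : ℕ, ContinuousOn (fun x => (x - x₀) ^ n) (Ioi x₀) :=
      fun n => by fun_prop
    exact (((continuousOn_const.div (hc 4) (hs 4)).add
      (h2.continuousOn.mul continuousOn_const)).add (continuousOn_const.mul
      (((continuousOn_const.div (hc 2) (hs 2)).add h1.continuousOn).pow 2))).sub continuousOn_id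
  exact h.congr fun x hx => RP1_eq hx

lemma pow_mul_RP1 {x u : ℝ} {a w : ℚ} (hx : x₀ < x) (hu : x - x₀ = a + w * u) :
    (x - x₀) ^ 3 * RP1 x = ev (resid a w) u := by
  have hs : x - x₀ ≠ 0 := (sub_pos.2 hx).ne'
  have hτ : τP1 x = ((a - 7/10) / hQ - 1 : ℚ) + u * (w / hQ : ℚ) := by
    rw [τP1_eq, hu]
    push_cast
    ring
  have hx' : x = (a - 770766/323285 : ℚ) + u * w := by
    have : x = x - x₀ + x₀ := by ring
    rw [this, hu, x₀]
    push_cast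
    ring
  have hs' : x - x₀ = a + u * w := by rw [hu]; ring
  simp only [resid, ev_mul, ev_add, ev_smul, ev_comp, ev, mul_zero, add_zero, ← hτ, ← hx', ← hs']
  rw [RP1_eq hx]
  push_cast
  field_simp
  ring

/-- The bound on one piece `[a - w, a + w]` of the range of `s = x - x₀`. -/
lemma abs_RP1_le_of_piece {x : ℝ} (a w : ℚ) (hw : 0 < w) (hx : x₀ < x)
    (hn : norm1 (resid a w) ≤ 29/1000000000)
    (h1 : ((a - w : ℚ) : ℝ) ≤ x - x₀) (h2 : x - x₀ ≤ ((a + w : ℚ) : ℝ)) :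
    (x - x₀) ^ 3 * |RP1 x| ≤ 2.9e-8 := by
  have hw' : (0 : ℝ) < w := by exact_mod_cast hw
  push_cast at h1 h2
  have hu : x - x₀ = a + w * ((x - x₀ - a) / w) := by field_simp; ring
  have hu1 : |(x - x₀ - a) / w| ≤ 1 := by
    rw [abs_div, abs_of_pos hw', div_le_one hw', abs_le]
    constructor <;> linarith
  have hpos : (0 : ℝ) < (x - x₀) ^ 3 := pow_pos (sub_pos.2 hx) 3
  rw [← abs_of_pos hpos, ← abs_mul, pow_mul_RP1 hx hu]
  refine (abs_ev_le _ hu1).trans ?_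
  have : ((norm1 (resid a w) : ℚ) : ℝ) ≤ ((29/1000000000 : ℚ) : ℝ) := by exact_mod_cast hn
  refine this.trans ?_
  norm_num

-- Exact rational arithmetic on polynomials of degree 47, evaluated by the kernel.
set_option maxRecDepth 100000 in
lemma norm1_resid_1 : norm1 (resid (159/200) (19/200)) ≤ 29/1000000000 := by decide +kernel
set_option maxRecDepth 100000 in
lemma norm1_resid_2 : norm1 (resid (41/40) (27/200)) ≤ 29/1000000000 := by decide +kernel
set_option maxRecDepth 100000 in
lemma norm1_resid_3 : norm1 (resid (251/200) (19/200)) ≤ 29/1000000000 := by decide +kernel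
set_option maxRecDepth 100000 in
lemma norm1_resid_4 : norm1 (resid (57/40) (3/40)) ≤ 29/1000000000 := by decide +kernel
set_option maxRecDepth 100000 in
lemma norm1_resid_5 : norm1 (resid (679/400) (79/400)) ≤ 29/1000000000 := by decide +kernel

lemma abs_RP1_le {x : ℝ} (h1 : 7/10 ≤ x - x₀) (h2 : x - x₀ ≤ 379/200) :
    |RP1 x| ≤ 2.9e-8 * ((x - x₀) ^ 3)⁻¹ := by
  have hx : x₀ < x := by linarith
  rw [← div_eq_mul_inv, le_div_iff₀' (pow_pos (sub_pos.2 hx) 3)]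
  rcases le_total (x - x₀) (89/100) with g1 | g1
  · exact abs_RP1_le_of_piece _ _ (by norm_num) hx norm1_resid_1
      (by norm_num; linarith) (by norm_num; linarith)
  rcases le_total (x - x₀) (29/25) with g2 | g2
  · exact abs_RP1_le_of_piece _ _ (by norm_num) hx norm1_resid_2
      (by norm_num; linarith) (by norm_num; linarith)
  rcases le_total (x - x₀) (27/20) with g3 | g3
  · exact abs_RP1_le_of_piece _ _ (by norm_num) hx norm1_resid_3
      (by norm_num; linarith) (by norm_num; linarith)
  rcases le_total (x - x₀) (3/2) with g4 | g4
  · exact abs_RP1_le_of_piece _ _ (by norm_num) hx norm1_resid_4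
      (by norm_num; linarith) (by norm_num; linarith)
  · exact abs_RP1_le_of_piece _ _ (by norm_num) hx norm1_resid_5
      (by norm_num; linarith) (by norm_num; linarith)

/-! ### The two integrals -/

/-- The first integral in `E₀`. -/
def int1 (x : ℝ) : ℝ := ∫ t in L₀..x, (t - x₀) ^ (-3 : ℤ) * RP1 t

/-- The second integral in `E₀`. -/
def int2 (x : ℝ) : ℝ := ∫ t in L₀..x, (t - x₀) ^ 4 * RP1 t

lemma x₀_lt_L₀ : x₀ < L₀ := by norm_num [x₀, L₀]

/-- `L₀ - x₀ = 1.89416…`. -/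
lemma L₀_sub_x₀ : L₀ - x₀ ≤ 1.89417 := by norm_num [x₀, L₀]

lemma continuousOn_int1 : ContinuousOn (fun t => (t - x₀) ^ (-3 : ℤ) * RP1 t) (Ioi x₀) := by
  refine ContinuousOn.mul ?_ continuousOn_RP1
  exact (by fun_prop : ContinuousOn (fun t => t - x₀) (Ioi x₀)).zpow₀ (-3)
    fun t ht => Or.inl (sub_pos.2 ht).ne'

lemma continuousOn_int2 : ContinuousOn (fun t => (t - x₀) ^ 4 * RP1 t) (Ioi x₀) :=
  ContinuousOn.mul (by fun_prop) continuousOn_RP1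

lemma hasDerivAt_integral {f : ℝ → ℝ} (hf : ContinuousOn f (Ioi x₀)) {x : ℝ} (hx : x₀ < x) :
    HasDerivAt (fun y => ∫ t in L₀..y, f t) (f x) x := by
  refine intervalIntegral.integral_hasDerivAt_right ?_ ?_ ?_
  · refine (hf.mono fun t ht => ?_).intervalIntegrable
    exact (lt_min x₀_lt_L₀ hx).trans_le ht.1
  · exact hf.stronglyMeasurableAtFilter isOpen_Ioi x hx
  · exact hf.continuousAt (Ioi_mem_nhds hx)

/-- If `|f| ≤ G'` on `[x, L₀]` then `|∫_{L₀}^x f| ≤ G(L₀) - G(x)`. -/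
lemma abs_integral_le_of_deriv {f g G : ℝ → ℝ} {x : ℝ} (hx : x₀ < x) (hxL : x ≤ L₀)
    (hG : ∀ t ∈ Ioi x₀, HasDerivAt G (g t) t) (hg : ContinuousOn g (Ioi x₀))
    (hfg : ∀ t ∈ Icc x L₀, |f t| ≤ g t) :
    |∫ t in L₀..x, f t| ≤ G L₀ - G x := by
  have hsub : uIcc x L₀ ⊆ Ioi x₀ := by
    rw [uIcc_of_le hxL]
    exact fun t ht => hx.trans_le ht.1
  have hi : IntervalIntegrable g MeasureTheory.volume x L₀ := (hg.mono hsub).intervalIntegrable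
  rw [intervalIntegral.integral_symm, abs_neg,
    ← intervalIntegral.integral_eq_sub_of_hasDerivAt (fun t ht => hG t (hsub ht)) hi,
    ← Real.norm_eq_abs]
  refine intervalIntegral.norm_integral_le_of_norm_le hxL ?_ hi
  exact Filter.Eventually.of_forall fun t ht => hfg t (Ioc_subset_Icc_self ht)

lemma abs_int1_le {x : ℝ} (h1 : 7/10 ≤ x - x₀) (hxL : x ≤ L₀) :
    |int1 x| ≤ 2.9e-8 / 5 * ((x - x₀) ^ 5)⁻¹ := by
  have hx : x₀ < x := by linarith
  have key : |int1 x| ≤ -(2.9e-8 / 5) * ((L₀ - x₀) ^ 5)⁻¹ - -(2.9e-8 / 5) * ((x - x₀) ^ 5)⁻¹ := by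
    refine abs_integral_le_of_deriv (g := fun t => 2.9e-8 * ((t - x₀) ^ 6)⁻¹)
      (G := fun t => -(2.9e-8 / 5) * ((t - x₀) ^ 5)⁻¹) hx hxL (fun t ht => ?_) ?_ fun t ht => ?_
    · have hs : t - x₀ ≠ 0 := (sub_pos.2 ht).ne'
      have h := ((((hasDerivAt_id t).sub_const x₀).pow 5).inv (pow_ne_zero 5 hs)).const_mul
        (-(2.9e-8 / 5) : ℝ)
      refine h.congr_deriv ?_
      simp only [id, Pi.pow_apply]
      field_simp
      norm_num
    · refine continuousOn_const.mul (ContinuousOn.inv₀ (by fun_prop) fun t ht => ?_)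
      exact pow_ne_zero 6 (sub_pos.2 ht).ne'
    · have hs : 0 < t - x₀ := by linarith [ht.1]
      have hR := abs_RP1_le (x := t) (by linarith [ht.1]) (by linarith [ht.2, L₀_sub_x₀])
      rw [abs_mul, abs_of_pos (zpow_pos hs _)]
      calc (t - x₀) ^ (-3 : ℤ) * |RP1 t|
          ≤ (t - x₀) ^ (-3 : ℤ) * (2.9e-8 * ((t - x₀) ^ 3)⁻¹) := by gcongr
        _ = 2.9e-8 * ((t - x₀) ^ 6)⁻¹ := by
          rw [show (t - x₀) ^ (-3 : ℤ) = ((t - x₀) ^ 3)⁻¹ from zpow_neg_coe_of_pos _ (by norm_num)]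
          field_simp
  have : 0 < ((L₀ - x₀) ^ 5)⁻¹ := inv_pos.2 (pow_pos (sub_pos.2 x₀_lt_L₀) 5)
  linarith

lemma abs_int2_le {x : ℝ} (h1 : 7/10 ≤ x - x₀) (hxL : x ≤ L₀) :
    |int2 x| ≤ 2.9e-8 / 2 * (3.588 - (x - x₀) ^ 2) := by
  have hx : x₀ < x := by linarith
  have key : |int2 x| ≤ 2.9e-8 / 2 * (L₀ - x₀) ^ 2 - 2.9e-8 / 2 * (x - x₀) ^ 2 := by
    refine abs_integral_le_of_deriv (g := fun t => 2.9e-8 * (t - x₀))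
      (G := fun t => 2.9e-8 / 2 * (t - x₀) ^ 2) hx hxL (fun t ht => ?_) (by fun_prop)
      fun t ht => ?_
    · have h := (((hasDerivAt_id t).sub_const x₀).pow 2).const_mul (2.9e-8 / 2 : ℝ)
      refine h.congr_deriv ?_
      simp only [id]
      norm_num
      ring
    · have hs : 0 < t - x₀ := by linarith [ht.1]
      have hR := abs_RP1_le (x := t) (by linarith [ht.1]) (by linarith [ht.2, L₀_sub_x₀])
      rw [abs_mul, abs_of_pos (pow_pos hs _)]
      calc (t - x₀) ^ 4 * |RP1 t|
          ≤ (t - x₀) ^ 4 * (2.9e-8 * ((t - x₀) ^ 3)⁻¹) := by gcongr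
        _ = 2.9e-8 * (t - x₀) := by field_simp
  have h2 : (L₀ - x₀) ^ 2 ≤ 3.588 := by norm_num [x₀, L₀]
  linarith

/-- The derivatives of the two integrals contribute `s⁴ s⁻³ R - s⁻³ s⁴ R = 0`. -/
lemma hasDerivAt_E₀ (α β : ℝ) {x : ℝ} (hx : x₀ < x) :
    HasDerivAt (E₀ α β)
      (4 * α * (x - x₀) ^ 3 - 3 * β * ((x - x₀) ^ 4)⁻¹ + 4 / 7 * (x - x₀) ^ 3 * int1 x +
        3 / 7 * ((x - x₀) ^ 4)⁻¹ * int2 x) x := by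
  have hs : x - x₀ ≠ 0 := (sub_pos.2 hx).ne'
  have hp : HasDerivAt (fun x => (x - x₀) ^ 4) (4 * (x - x₀) ^ 3) x := by
    refine (((hasDerivAt_id x).sub_const x₀).pow 4).congr_deriv ?_
    simp
  have hz : HasDerivAt (fun x => (x - x₀) ^ (-3 : ℤ)) (-3 * ((x - x₀) ^ 4)⁻¹) x := by
    have h := (hasDerivAt_zpow (-3) (x - x₀) (Or.inl hs)).comp x ((hasDerivAt_id x).sub_const x₀)
    refine h.congr_deriv ?_
    rw [show ((x - x₀) ^ 4)⁻¹ = (x - x₀) ^ (-3 - 1 : ℤ) from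
      (zpow_neg_coe_of_pos _ (by norm_num : 0 < 4)).symm]
    push_cast
    ring
  have h1 : HasDerivAt int1 ((x - x₀) ^ (-3 : ℤ) * RP1 x) x :=
    hasDerivAt_integral continuousOn_int1 hx
  have h2 : HasDerivAt int2 ((x - x₀) ^ 4 * RP1 x) x :=
    hasDerivAt_integral continuousOn_int2 hx
  have h := (((hp.const_mul α).add (hz.const_mul β)).add
    ((hp.const_mul (1 / 7)).mul h1)).sub ((hz.const_mul (1 / 7)).mul h2)
  refine h.congr_deriv ?_
  ring

/-! ### The final one-variable inequalities -/

/-- A linear upper bound for `s⁷`, the tangent bound for `s⁴` at `7/10` and `s² ≥ (7/10)²` reduce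
this to a linear inequality in `s`. -/
lemma scalar_bound {s : ℝ} (h1 : 7/10 ≤ s) (h2 : s ≤ 1.89417) :
    4 * 9.22e-9 * s ^ 7 + 3 * 9.76e-7 + 4 / 35 * 2.9e-8 * s ^ 2 +
      3 / 14 * 2.9e-8 * (3.588 - s ^ 2) ≤ 1.23e-5 * s ^ 4 := by
  have h7 : s ^ 7 ≤ (7/10) ^ 7 + 327 * (s - 7/10) := by
    have hk : ∀ n : ℕ, s ^ n ≤ 1.9 ^ n := fun n =>
      pow_le_pow_left₀ (by linarith) (by linarith) n
    have hq : s ^ 6 + s ^ 5 * (7/10) + s ^ 4 * (7/10) ^ 2 + s ^ 3 * (7/10) ^ 3 +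
        s ^ 2 * (7/10) ^ 4 + s * (7/10) ^ 5 + (7/10) ^ 6 ≤ 327 := by
      have := hk 6; have := hk 5; have := hk 4; have := hk 3; have := hk 2
      norm_num at *
      linarith
    nlinarith [mul_le_mul_of_nonneg_left hq (sub_nonneg.2 h1)]
  have h4 : (7/10) ^ 4 + 4 * (7/10) ^ 3 * (s - 7/10) ≤ s ^ 4 := by
    have hp : 0 ≤ (s + 7/10) ^ 2 + 2 * (7/10) ^ 2 := by positivity
    nlinarith [mul_nonneg (sq_nonneg (s - 7/10)) hp]
  have hsq : (7/10) ^ 2 ≤ s ^ 2 := pow_le_pow_left₀ (by norm_num) h1 2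
  norm_num at *
  linarith

/-- For all `α, β` with `|α| ≤ 9.22×10⁻⁹` and `|β| ≤ 9.76×10⁻⁷`,
`sup_{[x₀+r,L₀]} (x-x₀)^{16/5}|E₀(x)| ≤ 2.04×10⁻⁶` and `sup_{[x₀+r,L₀]} |E₀'(x)| ≤ 1.23×10⁻⁵`. -/
theorem statement17 (α β : ℝ) (hα : |α| ≤ 9.22e-9) (hβ : |β| ≤ 9.76e-7) :
    ∀ x ∈ Icc (x₀ + rP1) L₀,
      (x - x₀) ^ ((16 : ℝ) / 5) * |E₀ α β x| ≤ 2.04e-6 ∧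
      |deriv (E₀ α β) x| ≤ 1.23e-5 := by
  rintro x ⟨hx1, hx2⟩
  have h1 : 7/10 ≤ x - x₀ := by
    have : x₀ + 7/10 ≤ x := hx1
    linarith
  have h2 : x - x₀ ≤ 1.89417 := by linarith [L₀_sub_x₀]
  have hx : x₀ < x := by linarith
  have i1 := abs_int1_le h1 hx2
  have i2 := abs_int2_le h1 hx2
  have hE : E₀ α β x = α * (x - x₀) ^ 4 + β * ((x - x₀) ^ 3)⁻¹ +
      1 / 7 * (x - x₀) ^ 4 * int1 x - 1 / 7 * ((x - x₀) ^ 3)⁻¹ * int2 x := by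
    rw [show ((x - x₀) ^ 3)⁻¹ = (x - x₀) ^ (-3 : ℤ) from
      (zpow_neg_coe_of_pos _ (by norm_num : 0 < 3)).symm]
    rfl
  rw [(hasDerivAt_E₀ α β hx).deriv, hE]
  generalize int1 x = I at *
  generalize int2 x = J at *
  generalize x - x₀ = s at *
  have hs : 0 < s := by linarith
  constructor
  · have hb : |α * s ^ 4 + β * (s ^ 3)⁻¹ + 1 / 7 * s ^ 4 * I - 1 / 7 * (s ^ 3)⁻¹ * J| ≤
        9.22e-9 * s ^ 4 + 9.76e-7 * (s ^ 3)⁻¹ + 1 / 7 * s ^ 4 * (2.9e-8 / 5 * (s ^ 5)⁻¹) +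
          1 / 7 * (s ^ 3)⁻¹ * (2.9e-8 / 2 * (3.588 - s ^ 2)) := by
      refine (abs_sub _ _).trans (add_le_add ((abs_add_le _ _).trans (add_le_add
        ((abs_add_le _ _).trans (add_le_add ?_ ?_)) ?_)) ?_) <;> rw [abs_mul]
      · rw [abs_of_pos (a := s ^ 4) (by positivity)]; gcongr
      · rw [abs_of_pos (a := (s ^ 3)⁻¹) (by positivity)]; gcongr
      · rw [abs_of_pos (a := 1 / 7 * s ^ 4) (by positivity)]; gcongr
      · rw [abs_of_pos (a := 1 / 7 * (s ^ 3)⁻¹) (by positivity)]; gcongr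
    have hr : s ^ ((16 : ℝ) / 5) = s ^ 3 * s ^ ((1 : ℝ) / 5) := by
      rw [← Real.rpow_natCast, ← Real.rpow_add hs]
      norm_num
    have hfifth : s ^ ((1 : ℝ) / 5) ≤ 1.1363 := by
      -- `1.1363⁵ > 1.89417`
      have : ((1.1363 : ℝ) ^ (5 : ℕ)) ^ ((1 : ℝ) / 5) = 1.1363 := by
        rw [← Real.rpow_natCast, ← Real.rpow_mul (by norm_num)]
        norm_num
      rw [← this]
      refine Real.rpow_le_rpow hs.le (h2.trans ?_) (by norm_num)
      norm_num
    have hM : s ^ 3 * (9.22e-9 * s ^ 4 + 9.76e-7 * (s ^ 3)⁻¹ +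
        1 / 7 * s ^ 4 * (2.9e-8 / 5 * (s ^ 5)⁻¹) +
          1 / 7 * (s ^ 3)⁻¹ * (2.9e-8 / 2 * (3.588 - s ^ 2))) ≤ 1.7903e-6 := by
      have e : s ^ 3 * (9.22e-9 * s ^ 4 + 9.76e-7 * (s ^ 3)⁻¹ +
          1 / 7 * s ^ 4 * (2.9e-8 / 5 * (s ^ 5)⁻¹) +
            1 / 7 * (s ^ 3)⁻¹ * (2.9e-8 / 2 * (3.588 - s ^ 2))) =
          9.22e-9 * s ^ 7 + 9.76e-7 + 2.9e-8 / 35 * s ^ 2 + 2.9e-8 / 14 * (3.588 - s ^ 2) := by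
        field_simp
        ring
      have h7 : s ^ 7 ≤ 1.89417 ^ 7 := pow_le_pow_left₀ hs.le h2 7
      have hsq : 0 ≤ s ^ 2 := sq_nonneg s
      rw [e]
      norm_num at *
      linarith
    rw [hr, mul_comm (s ^ 3), mul_assoc]
    calc s ^ ((1 : ℝ) / 5) *
          (s ^ 3 * |α * s ^ 4 + β * (s ^ 3)⁻¹ + 1 / 7 * s ^ 4 * I - 1 / 7 * (s ^ 3)⁻¹ * J|)
        ≤ s ^ ((1 : ℝ) / 5) * 1.7903e-6 := by
          refine mul_le_mul_of_nonneg_left (le_trans ?_ hM) (by positivity)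
          exact mul_le_mul_of_nonneg_left hb (by positivity)
      _ ≤ 1.1363 * 1.7903e-6 := by gcongr
      _ ≤ 2.04e-6 := by norm_num
  · have hb : |4 * α * s ^ 3 - 3 * β * (s ^ 4)⁻¹ + 4 / 7 * s ^ 3 * I + 3 / 7 * (s ^ 4)⁻¹ * J| ≤
        4 * 9.22e-9 * s ^ 3 + 3 * 9.76e-7 * (s ^ 4)⁻¹ + 4 / 7 * s ^ 3 * (2.9e-8 / 5 * (s ^ 5)⁻¹) +
          3 / 7 * (s ^ 4)⁻¹ * (2.9e-8 / 2 * (3.588 - s ^ 2)) := by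
      refine (abs_add_le _ _).trans (add_le_add ((abs_add_le _ _).trans (add_le_add
        ((abs_sub _ _).trans (add_le_add ?_ ?_)) ?_)) ?_) <;> rw [abs_mul]
      · rw [abs_of_pos (a := s ^ 3) (by positivity), abs_mul,
          abs_of_pos (a := (4 : ℝ)) (by norm_num)]
        gcongr
      · rw [abs_of_pos (a := (s ^ 4)⁻¹) (by positivity), abs_mul,
          abs_of_pos (a := (3 : ℝ)) (by norm_num)]
        gcongr
      · rw [abs_of_pos (a := 4 / 7 * s ^ 3) (by positivity)]; gcongr
      · rw [abs_of_pos (a := 3 / 7 * (s ^ 4)⁻¹) (by positivity)]; gcongr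
    refine hb.trans ?_
    have e : 4 * 9.22e-9 * s ^ 3 + 3 * 9.76e-7 * (s ^ 4)⁻¹ +
        4 / 7 * s ^ 3 * (2.9e-8 / 5 * (s ^ 5)⁻¹) +
          3 / 7 * (s ^ 4)⁻¹ * (2.9e-8 / 2 * (3.588 - s ^ 2)) =
        (4 * 9.22e-9 * s ^ 7 + 3 * 9.76e-7 + 4 / 35 * 2.9e-8 * s ^ 2 +
          3 / 14 * 2.9e-8 * (3.588 - s ^ 2)) / s ^ 4 := by
      field_simp
      ring
    rw [e, div_le_iff₀ (by positivity)]
    exact scalar_bound h1 h2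

end
end

section
/- Let y be a holomorphic function on a connected open subset of ℂ containing the circle {x ∈ ℂ : |x - x_0| = 7/10} which satisfies y''(x) + 6·y(x)² - x = 0 there. If |y(x_0 + r) - Y_0(r)| ≤ 1.27×10^{-5} and |y'(x_0 + r) - Y_0'(r)| ≤ 3.77×10^{-5}, then for every ζ ∈ ℂ with |ζ| = 7/10 one has |y(x_0 + ζ) - Y_0(ζ)| ≤ 2.35×10^{-5} and |y'(x_0 + ζ) - Y_0'(ζ)| ≤ 1.16×10^{-4}. -/
/-!
Write `w(ζ) = y(x_0 + ζ) - Y_0(ζ)`. It satisfies `w'' + 12 Y_0 w + 6 w² + R = 0` on the circle, where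
the residual `R = Y_0'' + 6 Y_0² - x_0 - ζ` is a polynomial starting at `ζ^18`, of size about
`1.3e-6`. The linear equation `u'' + 12 Y_0 u = 0` has Frobenius solutions `u₁ = ζ⁴ (1 + ⋯)` and
`u₂ = ζ⁻³ (1 + ⋯)` with Wronskian `-7`. Truncating them leaves small residuals `ρ₁`, `ρ₂`, and the
functions `w u_i' - w' u_i` are almost constant: their derivative is `w ρ_i + u_i (6 w² + R)`
(`wronskian_drift`). Integrating along the shorter arc from `7/10` and solving for `w`, `w'` by
Cramer's rule (`cramer_bound`) gives `|w| < 2.25e-5` and `|w'| < 1.1e-4`, provided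
`|w| ≤ 2.35e-5` along the arc; continuous induction (`bootstrap`) removes the proviso.

All the explicit functions are Laurent polynomials with rational coefficients. They are encoded as
coefficient lists with computable arithmetic, so that the numerical bounds (`∑ |c_n| (7/10)^n` for
the suprema over the circle) are closed rational inequalities decided by evaluation.
-/

/-! ### Polynomials as coefficient lists -/

/-- The polynomial `∑ l_n z^n` with rational coefficient list `l`, evaluated in `ℂ` by Horner's
scheme. -/
noncomputable def ev : List ℚ → ℂ → ℂ
  | [], _ => 0
  | c :: l, z => (c : ℂ) + z * ev l z

/-- The same evaluation at a rational point, computable. -/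
def evq : List ℚ → ℚ → ℚ
  | [], _ => 0
  | c :: l, z => c + z * evq l z

/-- The majorant `∑ |l_n| s^n`. -/
def nb : List ℚ → ℚ → ℚ
  | [], _ => 0
  | c :: l, s => |c| + s * nb l s

/-- Coefficientwise sum of polynomials. -/
def padd : List ℚ → List ℚ → List ℚ
  | [], q => q
  | p, [] => p
  | c :: p, d :: q => (c + d) :: padd p q

/-- Multiplication of a polynomial by a constant. -/
def psmul (c : ℚ) : List ℚ → List ℚ
  | [] => []
  | d :: q => (c * d) :: psmul c q

/-- Product of polynomials. -/
def pmul : List ℚ → List ℚ → List ℚ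
  | [], _ => []
  | c :: p, q => padd (psmul c q) (0 :: pmul p q)

/-- Derivative of a polynomial, from `(c + z f)' = f + z f'`. -/
def pder : List ℚ → List ℚ
  | [] => []
  | _ :: l => padd l (0 :: pder l)

/-- The numerator of the derivative of a Laurent polynomial: `(f / z^k)' = (z f' - k f) / z^(k+1)`. -/
def lder (k : ℚ) (l : List ℚ) : List ℚ := padd (0 :: pder l) (psmul (-k) l)

lemma ev_padd (p q : List ℚ) (z : ℂ) : ev (padd p q) z = ev p z + ev q z := by
  induction p generalizing q with
  | nil => simp [padd, ev]
  | cons c p ih =>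
    cases q with
    | nil => simp [padd, ev]
    | cons d q => simp only [padd, ev, ih]; push_cast; ring

lemma ev_psmul (c : ℚ) (q : List ℚ) (z : ℂ) : ev (psmul c q) z = c * ev q z := by
  induction q with
  | nil => simp [psmul, ev]
  | cons d q ih => simp only [psmul, ev, ih]; push_cast; ring

lemma ev_pmul (p q : List ℚ) (z : ℂ) : ev (pmul p q) z = ev p z * ev q z := by
  induction p with
  | nil => simp [pmul, ev]
  | cons c p ih => simp only [pmul, ev, ev_padd, ev_psmul, ih]; push_cast; ring

lemma ev_lder (k : ℚ) (l : List ℚ) (z : ℂ) :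
    ev (lder k l) z = z * ev (pder l) z - k * ev l z := by
  simp only [lder, ev_padd, ev_psmul, ev]; push_cast; ring

lemma ev_ratCast (l : List ℚ) (s : ℚ) : ev l (s : ℂ) = (evq l s : ℂ) := by
  induction l with
  | nil => simp [ev, evq]
  | cons c l ih => simp only [ev, evq, ih]; push_cast; ring

lemma norm_ev_le (l : List ℚ) (s : ℚ) (z : ℂ) (hz : ‖z‖ = s) : ‖ev l z‖ ≤ (nb l s : ℝ) := by
  induction l with
  | nil => simp [ev, nb]
  | cons c l ih =>
    simp only [ev, nb]
    refine (norm_add_le _ _).trans ?_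
    rw [norm_mul, hz]
    push_cast
    have hs : (0 : ℝ) ≤ s := hz ▸ norm_nonneg z
    have hc : ‖(c : ℂ)‖ = |(c : ℝ)| := by
      rw [show (c : ℂ) = (((c : ℝ)) : ℂ) by push_cast; rfl, Complex.norm_real, Real.norm_eq_abs]
    rw [hc]
    gcongr

lemma hasDerivAt_ev (l : List ℚ) (z : ℂ) : HasDerivAt (ev l) (ev (pder l) z) z := by
  induction l with
  | nil => simpa [ev, pder] using (hasDerivAt_const z (0 : ℂ))
  | cons c l ih =>
    have h := ((hasDerivAt_id z).mul ih).const_add (c : ℂ)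
    have e : ev (pder (c :: l)) z = 1 * ev l z + id z * ev (pder l) z := by
      simp only [pder, ev_padd, ev, id]; push_cast; ring
    rw [e]
    exact h

/-- The Laurent polynomial `ev l z / z^k`. -/
noncomputable def lev (k : ℕ) (l : List ℚ) (z : ℂ) : ℂ := ev l z / z ^ k

lemma hasDerivAt_lev (k : ℕ) (l : List ℚ) {z : ℂ} (hz : z ≠ 0) :
    HasDerivAt (lev k l) (lev (k + 1) (lder k l) z) z := by
  have h := (hasDerivAt_ev l z).div (hasDerivAt_pow k z) (pow_ne_zero k hz)
  refine HasDerivAt.congr_deriv (f := lev k l) h ?_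
  rw [lev, ev_lder]
  rcases k with _ | k
  · field_simp
    simp
  · simp only [Nat.add_sub_cancel]
    push_cast
    field_simp
    ring

lemma norm_lev_le (k : ℕ) (l : List ℚ) (b : ℚ) (z : ℂ) (hz : ‖z‖ = 7 / 10)
    (h : nb l (7 / 10) ≤ b * (7 / 10) ^ k) : ‖lev k l z‖ ≤ (b : ℝ) := by
  have h1 := norm_ev_le l (7 / 10) z (by rw [hz]; norm_num)
  have h2 : (nb l (7 / 10) : ℝ) ≤ b * (7 / 10) ^ k := by
    have h3 := (Rat.cast_le (K := ℝ)).2 h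
    push_cast at h3
    exact h3
  rw [lev, norm_div, norm_pow, hz, div_le_iff₀ (by positivity)]
  exact h1.trans h2

lemma norm_lev_start_le (k : ℕ) (l : List ℚ) (b : ℚ)
    (h : |evq l (7 / 10)| ≤ b * (7 / 10) ^ k) : ‖lev k l (7 / 10)‖ ≤ (b : ℝ) := by
  have h1 : ev l (7 / 10) = (evq l (7 / 10) : ℂ) := by rw [← ev_ratCast]; norm_num
  have h2 : |(evq l (7 / 10) : ℝ)| ≤ b * (7 / 10) ^ k := by
    have h3 := (Rat.cast_le (K := ℝ)).2 h
    push_cast at h3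
    exact h3
  have hc : ‖(evq l (7 / 10) : ℂ)‖ = |(evq l (7 / 10) : ℝ)| := by
    rw [show ((evq l (7 / 10) : ℚ) : ℂ) = (((evq l (7 / 10) : ℚ) : ℝ) : ℂ) by push_cast; rfl,
      Complex.norm_real, Real.norm_eq_abs]
  have hn : ‖(7 / 10 : ℂ)‖ = 7 / 10 := by norm_num
  rw [lev, norm_div, norm_pow, hn, h1, hc, div_le_iff₀ (by positivity)]
  exact h2

/-! ### The data -/

/-- The coefficients `a_0, …, a_17` of `P`. -/
def aL : List ℚ :=
  [385383 / 1616425, -1 / 6, 19949 / 321055, 0, -49506685563 / 2612829780625, 128461 / 8082125,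
    -97499792909 / 12455071881000, 19949 / 9631650, 90096826251431314708225793 /
    226375225278394118135981078125, -544573541193 / 640143296253125, 22922081708252947 /
    40265379130490850000, -1041035358169 / 4483825877160000, 587214351327162310761262272254561 /
    14929477799641631066244491139694687500, 17538965929177365277646812 /
    655296704753246131446261015625, -670831429508462862216520285639237 /
    22094384977333466373836811131376250000, 1736688746159642627 / 102596186024490685800000,
    -519267392915250281694463921122899387124577 / 91220400755640034815841071012018124215468750000,
    197922898847086344857290544484657263 / 650328052952389449245610034045100587500000]

/-- The numerator of `Y_0 = (-1 + ζ⁴ P) / ζ²`. -/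
def NL : List ℚ := [-1, 0, 0, 0] ++ aL

/-- Truncated Frobenius solution `u₁ = ζ⁴ (1 + ⋯)` of `u'' + 12 Y_0 u = 0`, with coefficients
rounded to four decimals. -/
def p1 : List ℚ :=
  [0, 0, 0, 0, 1, 0, 0, 0, -13 / 200, 333 / 10000, -6 / 625, 0, 17 / 5000, -29 / 10000]

/-- Numerator of the truncated Frobenius solution `u₂ = ζ⁻³ (1 + ⋯)` of `u'' + 12 Y_0 u = 0`, with
coefficients rounded to four decimals. -/
def p2 : List ℚ :=
  [1, 0, 0, 0, 149 / 625, -1 / 5, 1243 / 10000, 0, -71 / 1250, 477 / 10000, -7 / 250, 17 / 2000]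

/-- Numerator, over `ζ⁴`, of the residual `Y_0'' + 6 Y_0² - x_0 - ζ`. -/
def RL : List ℚ :=
  padd (padd (lder 3 (lder 2 NL)) (psmul 6 (pmul NL NL))) [0, 0, 0, 0, 770766 / 323285, -1]

/-- Numerator, over `ζ²`, of `u₁'' + 12 Y_0 u₁`. -/
def rho1L : List ℚ := padd (lder 1 (lder 0 p1)) (psmul 12 (pmul NL p1))

/-- Numerator, over `ζ⁵`, of `u₂'' + 12 Y_0 u₂`. -/
def rho2L : List ℚ := padd (lder 4 (lder 3 p2)) (psmul 12 (pmul NL p2))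

/-- Numerator, over `ζ⁴`, of `u₁ u₂' - u₁' u₂ + 7`: the Wronskian of the two exact Frobenius
solutions is `-7`. -/
def wronL : List ℚ :=
  padd (padd (pmul p1 (lder 3 p2)) (psmul (-1) (pmul (lder 0 p1) p2))) [0, 0, 0, 0, 7]

/-! Coefficientwise majorants on the circle `|ζ| = 7/10`, and absolute values at `ζ = 7/10`; the
factor `(7/10)^k` accounts for the denominator `ζ^k`. -/

lemma nb_RL : nb RL (7 / 10) ≤ 33 / 25000000 * (7 / 10) ^ 4 := by decide +kernel
lemma nb_rho1 : nb rho1L (7 / 10) ≤ 51 / 10000 * (7 / 10) ^ 2 := by decide +kernel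
lemma nb_rho2 : nb rho2L (7 / 10) ≤ 239 / 5000 * (7 / 10) ^ 5 := by decide +kernel
lemma nb_wron : nb wronL (7 / 10) ≤ 17 / 10000 * (7 / 10) ^ 4 := by decide +kernel
lemma nb_p1 : nb p1 (7 / 10) ≤ 307 / 1250 * (7 / 10) ^ 0 := by decide +kernel
lemma nb_p1' : nb (lder 0 p1) (7 / 10) ≤ 7187 / 5000 * (7 / 10) ^ 1 := by decide +kernel
lemma nb_p2 : nb p2 (7 / 10) ≤ 3241 / 1000 * (7 / 10) ^ 3 := by decide +kernel
lemma nb_p2' : nb (lder 3 p2) (7 / 10) ≤ 133409 / 10000 * (7 / 10) ^ 4 := by decide +kernel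
lemma evq_p1 : |evq p1 (7 / 10)| ≤ 19 / 80 * (7 / 10) ^ 0 := by decide +kernel
lemma evq_p1' : |evq (lder 0 p1) (7 / 10)| ≤ 13429 / 10000 * (7 / 10) ^ 1 := by decide +kernel
lemma evq_p2 : |evq p2 (7 / 10)| ≤ 30213 / 10000 * (7 / 10) ^ 3 := by decide +kernel
lemma evq_p2' : |evq (lder 3 p2) (7 / 10)| ≤ 123913 / 10000 * (7 / 10) ^ 4 := by decide +kernel

/-- The list `aL` satisfies the recursion defining `a_n`. -/
lemma aL_rec : ∀ n ∈ Finset.range 18, 4 ≤ n → aL.getD n 0 = -(6 / (((n : ℚ) + 5) * ((n : ℚ) - 2))) *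
    ∑ k ∈ Finset.range (n - 4 + 1), aL.getD k 0 * aL.getD (n - 4 - k) 0 := by
  decide +kernel

/-! ### The perturbation argument along the circle -/

/-- Continuous induction: a bound that holds initially and improves strictly as soon as it holds
on all of `[0, t]` never fails. -/
lemma bootstrap {f : ℝ → ℝ} {M : ℝ} (hf : ContinuousOn f (Set.Icc 0 1)) (h0 : f 0 ≤ M)
    (h : ∀ t ∈ Set.Icc (0 : ℝ) 1, (∀ s ∈ Set.Icc 0 t, f s ≤ M) → f t < M) :
    ∀ t ∈ Set.Icc (0 : ℝ) 1, f t ≤ M := by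
  by_contra! hcon
  obtain ⟨t₁, ht₁, hlt⟩ := hcon
  have hK : IsCompact (Set.Icc (0 : ℝ) 1 ∩ f ⁻¹' Set.Ici M) :=
    isCompact_Icc.of_isClosed_subset
      (hf.preimage_isClosed_of_isClosed isClosed_Icc isClosed_Ici) Set.inter_subset_left
  obtain ⟨t, ⟨ht, htM⟩, hmin⟩ := hK.exists_isLeast ⟨t₁, ht₁, hlt.le⟩
  have hbefore : ∀ s ∈ Set.Ico 0 t, f s ≤ M := fun s hs => by
    by_contra! hs'
    exact absurd (hmin ⟨⟨hs.1, hs.2.le.trans ht.2⟩, hs'.le⟩) (not_le.2 hs.2)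
  have hat : f t ≤ M := by
    rcases ht.1.eq_or_lt with h' | h'
    · rwa [← h']
    · have hc : ContinuousWithinAt f (Set.Ico 0 t) t :=
        (hf t ht).mono fun s hs => ⟨hs.1, hs.2.le.trans ht.2⟩
      have hcl : t ∈ closure (Set.Ico 0 t) := by
        rw [closure_Ico h'.ne]; exact ⟨h'.le, le_rfl⟩
      have := mem_closure_iff_nhdsWithin_neBot.1 hcl
      exact le_of_tendsto hc (Filter.eventually_of_mem self_mem_nhdsWithin hbefore)
  refine absurd htM (not_le.2 (h t ht fun s hs => ?_))
  rcases hs.2.eq_or_lt with h' | h'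
  · rwa [h']
  · exact hbefore s ⟨hs.1, h'⟩

/-- The arc of the circle `|ζ| = 7/10` from `7/10` to the point of argument `φ`. -/
noncomputable def arc (φ t : ℝ) : ℂ := 7 / 10 * Complex.exp (t * φ * Complex.I)

lemma norm_arc (φ t : ℝ) : ‖arc φ t‖ = 7 / 10 := by
  have h := Complex.norm_exp_ofReal_mul_I (t * φ)
  push_cast at h
  rw [arc, norm_mul, h]
  norm_num

lemma arc_zero (φ : ℝ) : arc φ 0 = 7 / 10 := by simp [arc]

lemma arc_one {ζ : ℂ} (hζ : ‖ζ‖ = 7 / 10) : arc ζ.arg 1 = ζ := by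
  have h := Complex.norm_mul_exp_arg_mul_I ζ
  rw [hζ] at h
  rw [arc]
  push_cast at h
  simpa using h

lemma hasDerivAt_arc (φ t : ℝ) : HasDerivAt (arc φ) (arc φ t * (φ * Complex.I)) t := by
  have h : HasDerivAt (fun t : ℝ => (t : ℂ) * φ * Complex.I) (1 * φ * Complex.I) t :=
    ((Complex.ofRealCLM.hasDerivAt (x := t)).mul_const _).mul_const _
  refine HasDerivAt.congr_deriv (f := arc φ) (h.cexp.const_mul (7 / 10 : ℂ)) ?_
  rw [arc]; ring

/-- If `u'' = ρ - 12 Y u` and `w'' = -(12 Y w + 6 w² + R)`, the Wronskian `w u' - w' u` varies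
slowly along the circle: its derivative is `w ρ + u (6 w² + R)`. Arguments `φ` in `[-π, π]` suffice
to reach every point, so the arc has length at most `7/10 · 3.15`. -/
lemma wronskian_drift {w w1 Y u v ρ R : ℂ → ℂ} {φ t M S Q B : ℝ}
    (hφ : |φ| ≤ 3.15) (ht : t ∈ Set.Icc (0 : ℝ) 1)
    (hM : 0 ≤ M) (hS : 0 ≤ S) (hQ : 0 ≤ Q) (hB : 0 ≤ B)
    (hw : ∀ ζ : ℂ, ‖ζ‖ = 7 / 10 → HasDerivAt w (w1 ζ) ζ)
    (hw1 : ∀ ζ : ℂ, ‖ζ‖ = 7 / 10 →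
      HasDerivAt w1 (-(12 * Y ζ * w ζ + 6 * w ζ ^ 2 + R ζ)) ζ)
    (hu : ∀ ζ : ℂ, ‖ζ‖ = 7 / 10 → HasDerivAt u (v ζ) ζ)
    (hv : ∀ ζ : ℂ, ‖ζ‖ = 7 / 10 → HasDerivAt v (ρ ζ - 12 * Y ζ * u ζ) ζ)
    (huS : ∀ ζ : ℂ, ‖ζ‖ = 7 / 10 → ‖u ζ‖ ≤ S)
    (hρ : ∀ ζ : ℂ, ‖ζ‖ = 7 / 10 → ‖ρ ζ‖ ≤ Q)
    (hR : ∀ ζ : ℂ, ‖ζ‖ = 7 / 10 → ‖R ζ‖ ≤ B)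
    (hwM : ∀ s ∈ Set.Icc 0 t, ‖w (arc φ s)‖ ≤ M) :
    ‖(w (arc φ t) * v (arc φ t) - w1 (arc φ t) * u (arc φ t)) -
        (w (7 / 10) * v (7 / 10) - w1 (7 / 10) * u (7 / 10))‖
      ≤ 7 / 10 * 3.15 * (M * Q + S * (6 * M ^ 2 + B)) := by
  set g : ℂ → ℂ := fun ζ => w ζ * v ζ - w1 ζ * u ζ with hg
  have hgd : ∀ ζ : ℂ, ‖ζ‖ = 7 / 10 →
      HasDerivAt g (w ζ * ρ ζ + u ζ * (6 * w ζ ^ 2 + R ζ)) ζ := fun ζ hζ => by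
    refine HasDerivAt.congr_deriv (f := g)
      (((hw ζ hζ).mul (hv ζ hζ)).sub ((hw1 ζ hζ).mul (hu ζ hζ))) ?_
    ring
  have hgc : ∀ s : ℝ, HasDerivAt (fun s => g (arc φ s))
      ((w (arc φ s) * ρ (arc φ s) + u (arc φ s) * (6 * w (arc φ s) ^ 2 + R (arc φ s))) *
        (arc φ s * (φ * Complex.I))) s :=
    fun s => (hgd _ (norm_arc φ s)).comp s (hasDerivAt_arc φ s)
  have hC : 0 ≤ 7 / 10 * 3.15 * (M * Q + S * (6 * M ^ 2 + B)) := by positivity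
  have key := norm_image_sub_le_of_norm_deriv_le_segment' (f := fun s => g (arc φ s)) (a := 0)
    (b := t) (C := 7 / 10 * 3.15 * (M * Q + S * (6 * M ^ 2 + B)))
    (fun s _ => (hgc s).hasDerivWithinAt) (fun s hs => by
      have hn := norm_arc φ s
      have h1 := hwM s ⟨hs.1, hs.2.le⟩
      have h2 := hρ _ hn
      have h3 := huS _ hn
      have h4 := hR _ hn
      have e1 : ‖arc φ s * (φ * Complex.I)‖ ≤ 7 / 10 * 3.15 := by
        rw [norm_mul, norm_mul, hn, Complex.norm_I, Complex.norm_real, Real.norm_eq_abs, mul_one]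
        gcongr
      have e2 : ‖6 * w (arc φ s) ^ 2 + R (arc φ s)‖ ≤ 6 * M ^ 2 + B := by
        refine (norm_add_le _ _).trans ?_
        rw [norm_mul, norm_pow]
        have : ‖(6 : ℂ)‖ = 6 := by norm_num
        rw [this]
        gcongr
      rw [norm_mul, mul_comm]
      refine mul_le_mul e1 ((norm_add_le _ _).trans ?_) (norm_nonneg _) (by norm_num)
      rw [norm_mul, norm_mul]
      gcongr) t ⟨ht.1, le_rfl⟩
  rw [arc_zero] at key
  refine key.trans ?_
  rw [sub_zero]
  exact mul_le_of_le_one_right hC ht.2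

/-- Cramer's rule bound, for `x` either of `w`, `w'`: with `α = w u₂' - w' u₂`, `β = w u₁' - w' u₁` one has
`w W = α u₁ - β u₂` and `w' W = α u₁' - β u₂'`, where `W = u₁ u₂' - u₁' u₂`
is within `0.0017` of `-7`. -/
lemma cramer_bound {x W α β u u' : ℂ} {m a b s s' : ℝ} (hx : x * W = α * u - β * u')
    (hW : ‖W + 7‖ ≤ 0.0017) (hα : ‖α‖ ≤ a) (hβ : ‖β‖ ≤ b) (hu : ‖u‖ ≤ s) (hu' : ‖u'‖ ≤ s')
    (hm : a * s + b * s' < m * 6.9983) : ‖x‖ < m := by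
  have h7 : (6.9983 : ℝ) ≤ ‖W‖ := by
    have h := norm_sub_le (W + 7) W
    have h' : ‖W + 7 - W‖ = 7 := by rw [add_sub_cancel_left]; norm_num
    rw [h'] at h
    norm_num at *
    linarith
  have ha := (norm_nonneg _).trans hα
  have hb := (norm_nonneg _).trans hβ
  have h1 : ‖x‖ * ‖W‖ ≤ a * s + b * s' := by
    rw [← norm_mul, hx]
    refine (norm_sub_le _ _).trans ?_
    rw [norm_mul, norm_mul]
    gcongr
  by_contra! hcon
  have : m * 6.9983 ≤ ‖x‖ * ‖W‖ :=
    (mul_le_mul_of_nonneg_right hcon (by norm_num)).trans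
      (mul_le_mul_of_nonneg_left h7 (norm_nonneg _))
  linarith

/-- `u₁'' = ρ₁ - 12 Y_0 u₁` for the truncated solution `u₁`. -/
lemma hasDerivAt_v1 {z : ℂ} (hz : z ≠ 0) :
    HasDerivAt (lev 1 (lder 0 p1)) (lev 2 rho1L z - 12 * lev 2 NL z * lev 0 p1 z) z := by
  convert hasDerivAt_lev 1 (lder 0 p1) hz using 1
  simp only [lev, rho1L, ev_padd, ev_psmul, ev_pmul]
  push_cast
  field_simp
  ring

/-- `u₂'' = ρ₂ - 12 Y_0 u₂` for the truncated solution `u₂`. -/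
lemma hasDerivAt_v2 {z : ℂ} (hz : z ≠ 0) :
    HasDerivAt (lev 4 (lder 3 p2)) (lev 5 rho2L z - 12 * lev 2 NL z * lev 3 p2 z) z := by
  convert hasDerivAt_lev 4 (lder 3 p2) hz using 1
  simp only [lev, rho2L, ev_padd, ev_psmul, ev_pmul]
  push_cast
  field_simp
  ring

lemma wron_eq {z : ℂ} (hz : z ≠ 0) :
    lev 0 p1 z * lev 4 (lder 3 p2) z - lev 1 (lder 0 p1) z * lev 3 p2 z + 7 = lev 4 wronL z := by
  simp only [lev, wronL, ev_padd, ev_psmul, ev_pmul]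
  simp only [ev]
  push_cast
  field_simp
  ring

/-- A solution `w` of `w'' + 12 Y_0 w + 6 w² + R = 0` on the circle obeying the initial bounds
stays within the claimed bounds. -/
lemma perturbation {w w1 : ℂ → ℂ}
    (hw : ∀ ζ : ℂ, ‖ζ‖ = 7 / 10 → HasDerivAt w (w1 ζ) ζ)
    (hw1 : ∀ ζ : ℂ, ‖ζ‖ = 7 / 10 →
      HasDerivAt w1 (-(12 * lev 2 NL ζ * w ζ + 6 * w ζ ^ 2 + lev 4 RL ζ)) ζ)
    (h0 : ‖w (7 / 10)‖ ≤ 1.27e-5) (h0' : ‖w1 (7 / 10)‖ ≤ 3.77e-5) (ζ : ℂ) (hζ : ‖ζ‖ = 7 / 10) :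
    ‖w ζ‖ ≤ 2.35e-5 ∧ ‖w1 ζ‖ ≤ 1.16e-4 := by
  have hne : ∀ z : ℂ, ‖z‖ = 7 / 10 → z ≠ 0 := fun z hz h => by simp [h] at hz; norm_num at hz
  have hφ : |ζ.arg| ≤ 3.15 := (Complex.abs_arg_le_pi ζ).trans (by
    have := Real.pi_lt_d2; norm_num at *; linarith)
  -- Values at the starting point: the majorants over the whole circle are too large here.
  have i1 := norm_lev_start_le 0 p1 _ evq_p1
  have i1' := norm_lev_start_le 1 (lder 0 p1) _ evq_p1'
  have i2 := norm_lev_start_le 3 p2 _ evq_p2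
  have i2' := norm_lev_start_le 4 (lder 3 p2) _ evq_p2'
  push_cast at i1 i1' i2 i2'
  have b1 := fun z hz => norm_lev_le 0 p1 _ z hz nb_p1
  have b1' := fun z hz => norm_lev_le 1 (lder 0 p1) _ z hz nb_p1'
  have b2 := fun z hz => norm_lev_le 3 p2 _ z hz nb_p2
  have b2' := fun z hz => norm_lev_le 4 (lder 3 p2) _ z hz nb_p2'
  have bR := fun z hz => norm_lev_le 4 RL _ z hz nb_RL
  have bρ1 := fun z hz => norm_lev_le 2 rho1L _ z hz nb_rho1
  have bρ2 := fun z hz => norm_lev_le 5 rho2L _ z hz nb_rho2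
  have bW := fun z hz => norm_lev_le 4 wronL _ z hz nb_wron
  push_cast at b1 b1' b2 b2' bR bρ1 bρ2 bW
  have hα0 : ‖w (7 / 10) * lev 4 (lder 3 p2) (7 / 10) - w1 (7 / 10) * lev 3 p2 (7 / 10)‖
      ≤ 1.27e-5 * (123913 / 10000) + 3.77e-5 * (30213 / 10000) := by
    refine (norm_sub_le _ _).trans ?_
    rw [norm_mul, norm_mul]
    gcongr
  have hβ0 : ‖w (7 / 10) * lev 1 (lder 0 p1) (7 / 10) - w1 (7 / 10) * lev 0 p1 (7 / 10)‖
      ≤ 1.27e-5 * (13429 / 10000) + 3.77e-5 * (19 / 80) := by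
    refine (norm_sub_le _ _).trans ?_
    rw [norm_mul, norm_mul]
    gcongr
  -- Strict improvement: the bound on `w` along the arc up to `t` yields a sharper one at `t`.
  have step : ∀ t ∈ Set.Icc (0 : ℝ) 1, (∀ s ∈ Set.Icc 0 t, ‖w (arc ζ.arg s)‖ ≤ 2.35e-5) →
      ‖w (arc ζ.arg t)‖ < 2.35e-5 ∧ ‖w1 (arc ζ.arg t)‖ < 1.16e-4 := by
    intro t ht hs
    have hn := norm_arc ζ.arg t
    have dα := wronskian_drift hφ ht (by norm_num) (by norm_num) (by norm_num) (by norm_num)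
      hw hw1 (fun z hz => hasDerivAt_lev 3 p2 (hne z hz)) (fun z hz => hasDerivAt_v2 (hne z hz))
      b2 bρ2 bR hs
    have dβ := wronskian_drift hφ ht (by norm_num) (by norm_num) (by norm_num) (by norm_num)
      hw hw1 (fun z hz => hasDerivAt_lev 0 p1 (hne z hz)) (fun z hz => hasDerivAt_v1 (hne z hz))
      b1 bρ1 bR hs
    have hα := (norm_le_norm_add_norm_sub' _ _).trans (add_le_add hα0 dα)
    have hβ := (norm_le_norm_add_norm_sub' _ _).trans (add_le_add hβ0 dβ)
    have hW := wron_eq (hne _ hn) ▸ bW _ hn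
    have hW' := hW.trans (show _ ≤ (0.0017 : ℝ) by norm_num)
    refine ⟨cramer_bound ?_ hW' hα hβ (b1 _ hn) (b2 _ hn) ?_,
      cramer_bound ?_ hW' hα hβ (b1' _ hn) (b2' _ hn) ?_⟩
    · ring_nf
    · norm_num
    · ring_nf
    · norm_num
  have hcont : ContinuousOn (fun t => ‖w (arc ζ.arg t)‖) (Set.Icc 0 1) := fun t _ =>
    ((hw _ (norm_arc _ t)).continuousAt.comp
      (hasDerivAt_arc ζ.arg t).continuousAt).norm.continuousWithinAt
  have hall := bootstrap hcont (by
    simp only [arc_zero]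
    exact h0.trans (by norm_num)) (fun t ht hs => (step t ht hs).1)
  have h1 := step 1 ⟨zero_le_one, le_rfl⟩ hall
  rw [arc_one hζ] at h1
  exact ⟨h1.1.le, h1.2.le⟩


/-! ### The approximate solution and the conclusion -/

lemma sum_eq_ev (l : List ℚ) (z : ℂ) :
    ∑ n ∈ Finset.range l.length, ((l.getD n 0 : ℚ) : ℂ) * z ^ n = ev l z := by
  induction l with
  | nil => simp [ev]
  | cons c l ih =>
    rw [List.length_cons, Finset.sum_range_succ', ev, ← ih, Finset.mul_sum, add_comm]
    simp only [List.getD_cons_zero, List.getD_cons_succ, pow_zero, mul_one, pow_succ]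
    congr 1
    exact Finset.sum_congr rfl fun n _ => by ring

/-- `Y_0'' + 6 Y_0² - x_0 - ζ` is the residual `R`. -/
lemma Y_residual {z : ℂ} (hz : z ≠ 0) :
    lev 4 (lder 3 (lder 2 NL)) z =
      lev 4 RL z - 6 * lev 2 NL z ^ 2 + (((-770766 / 323285 : ℝ) : ℂ) + z) := by
  simp only [lev, RL, ev_padd, ev_psmul, ev_pmul]
  simp only [ev]
  push_cast
  field_simp
  ring


/-- Let `y` be holomorphic on a connected open set `U ⊆ ℂ` containing the
circle `|x - x₀| = 7/10`, satisfying `y'' + 6y² - x = 0` on `U`. If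
`|y(x₀+r) - Y₀(r)| ≤ 1.27×10⁻⁵` and `|y'(x₀+r) - Y₀'(r)| ≤ 3.77×10⁻⁵`, then for every `ζ`
with `|ζ| = 7/10`, `|y(x₀+ζ) - Y₀(ζ)| ≤ 2.35×10⁻⁵` and `|y'(x₀+ζ) - Y₀'(ζ)| ≤ 1.16×10⁻⁴`. -/
theorem statement18 (x₀ : ℝ) (hx₀ : x₀ = -770766/323285) (r : ℝ) (hr : r = 7/10)
    (a : ℕ → ℝ)
    (h0 : a 0 = -x₀ / 10) (h1 : a 1 = -1/6) (h2 : a 2 = 19949/321055) (h3 : a 3 = 0)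
    (hrec : ∀ n, 4 ≤ n → n ≤ 17 →
      a n = -(6 / (((n : ℝ) + 5) * ((n : ℝ) - 2))) *
        ∑ k ∈ Finset.range (n - 4 + 1), a k * a (n - 4 - k))
    (Y₀ : ℂ → ℂ)
    (hY₀ : ∀ ζ : ℂ, Y₀ ζ = -1 / ζ ^ 2 + ζ ^ 2 * ∑ n ∈ Finset.range 18, (a n : ℂ) * ζ ^ n)
    (U : Set ℂ) (hUopen : IsOpen U) (hUconn : IsConnected U)
    (hUcirc : Metric.sphere (x₀ : ℂ) (7/10) ⊆ U)
    (y : ℂ → ℂ) (hy : DifferentiableOn ℂ y U)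
    (hode : ∀ x ∈ U, deriv (deriv y) x + 6 * (y x) ^ 2 - x = 0)
    (hinit : ‖y ((x₀ : ℂ) + (r : ℂ)) - Y₀ (r : ℂ)‖ ≤ 1.27e-5)
    (hinitd : ‖deriv y ((x₀ : ℂ) + (r : ℂ)) - deriv Y₀ (r : ℂ)‖ ≤ 3.77e-5) :
    ∀ ζ : ℂ, ‖ζ‖ = 7/10 →
      ‖y ((x₀ : ℂ) + ζ) - Y₀ ζ‖ ≤ 2.35e-5 ∧
      ‖deriv y ((x₀ : ℂ) + ζ) - deriv Y₀ ζ‖ ≤ 1.16e-4 := by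

  have ha : ∀ n, n < 18 → a n = ((aL.getD n 0 : ℚ) : ℝ) := by
    intro n
    induction n using Nat.strong_induction_on with
    | _ n ih =>
      intro hn
      by_cases h4 : 4 ≤ n
      · rw [hrec n h4 (by omega), aL_rec n (Finset.mem_range.2 hn) h4]
        push_cast
        congr 1
        refine Finset.sum_congr rfl fun k hk => ?_
        have hk' := Finset.mem_range.1 hk
        rw [ih k (by omega) (by omega), ih (n - 4 - k) (by omega) (by omega)]
      · have : n = 0 ∨ n = 1 ∨ n = 2 ∨ n = 3 := by omega
        rcases this with rfl | rfl | rfl | rfl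
        · rw [h0, hx₀]; norm_num [aL]
        · rw [h1]; norm_num [aL]
        · rw [h2]; norm_num [aL]
        · rw [h3]; norm_num [aL]
  have hY : ∀ z : ℂ, z ≠ 0 → Y₀ z = lev 2 NL z := by
    intro z hz
    have hs : ∑ n ∈ Finset.range 18, (a n : ℂ) * z ^ n = ev aL z := by
      rw [← sum_eq_ev]
      refine Finset.sum_congr rfl fun n hn => ?_
      rw [ha n (Finset.mem_range.1 hn)]
      push_cast
      rfl
    rw [hY₀, hs, lev]
    simp only [NL, List.cons_append, List.nil_append, ev]
    push_cast
    field_simp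
    ring
  have hne : ∀ z : ℂ, ‖z‖ = 7 / 10 → z ≠ 0 := fun z hz h => by simp [h] at hz; norm_num at hz
  have hYd : ∀ z : ℂ, z ≠ 0 → HasDerivAt Y₀ (lev 3 (lder 2 NL) z) z := fun z hz =>
    (hasDerivAt_lev 2 NL hz).congr_of_eventuallyEq
      ((isOpen_ne.eventually_mem hz).mono fun x hx => hY x hx)
  have hUm : ∀ z : ℂ, ‖z‖ = 7 / 10 → (x₀ : ℂ) + z ∈ U := fun z hz =>
    hUcirc (by simpa [Metric.mem_sphere, dist_eq_norm] using hz)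
  have hsh : ∀ z : ℂ, HasDerivAt (fun z : ℂ => (x₀ : ℂ) + z) 1 z := fun z =>
    (hasDerivAt_id z).const_add _
  have hr' : (r : ℂ) = 7 / 10 := by rw [hr]; push_cast; rfl
  have hn7 : ‖(7 / 10 : ℂ)‖ = 7 / 10 := by norm_num
  rw [hr', (hYd _ (hne _ hn7)).deriv] at hinitd
  rw [hr'] at hinit
  intro ζ hζ
  rw [(hYd _ (hne _ hζ)).deriv]
  refine perturbation (w := fun z => y ((x₀ : ℂ) + z) - Y₀ z)
    (w1 := fun z => deriv y ((x₀ : ℂ) + z) - lev 3 (lder 2 NL) z) ?_ ?_ hinit hinitd ζ hζ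
  · intro z hz
    have hd := (hy.differentiableAt (hUopen.mem_nhds (hUm z hz))).hasDerivAt
    have hc := hd.comp z (hsh z)
    rw [mul_one] at hc
    exact hc.sub (hYd z (hne z hz))
  · intro z hz
    have hd := ((hy.deriv hUopen).differentiableAt (hUopen.mem_nhds (hUm z hz))).hasDerivAt
    have hc := (hd.comp z (hsh z)).sub (hasDerivAt_lev 3 (lder 2 NL) (hne z hz))
    refine hc.congr_deriv ?_
    have ho := hode _ (hUm z hz)
    have hres := Y_residual (hne z hz)
    rw [← hx₀] at hres
    rw [show lev (3 + 1) (lder (3 : ℕ) (lder 2 NL)) z = lev 4 (lder 3 (lder 2 NL)) z from rfl, hres, hY z (hne z hz)]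
    linear_combination ho
end

section
/- Let f be meromorphic on an open set containing the closed disc {x ∈ ℂ : |x - x_0| ≤ 7/10}, with no poles on the circle |x - x_0| = 7/10, and suppose that near each pole x_p of f in the open disc the function f(x) + 1/(x - x_p)² extends holomorphically. If sup_{|ζ| = 7/10} |f(x_0 + ζ) - Y_0(ζ)| ≤ 2.35×10^{-5}, then f has exactly one pole x_p in the open disc {x : |x - x_0| < 7/10}, and this pole satisfies |x_p - x_0| ≤ 4.1×10^{-6}. -/
/-!
As a function of `x`, `Y₀(x - x₀)` is `-1/(x - x₀)²` plus a polynomial. The pole set `S` is discrete and closed in `U`, because `‖f‖ → ∞`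
at every point of `S` while `f` is continuous elsewhere; so the disc contains a finite set `T` of
poles, and `f + ∑_{q ∈ T} 1/(x - q)²` extends holomorphically to the closed disc. Cauchy's
theorem and Cauchy's formula for the derivative then give, for every entire `w`,

  `∮ w(x) (f(x) - Y₀(x - x₀)) dx = 2πi (w'(x₀) - ∑_{q ∈ T} w'(q))`,

and the left side is at most `2π r · sup |w| · 2.35e-5`. Taking `w = x - x₀` gives
`|1 - #T| ≤ r² · 2.35e-5 < 1`, hence `#T = 1`; taking `w = (x - x₀)²` gives
`2 |p - x₀| ≤ r³ · 2.35e-5 < 8.2e-6` for the only pole `p`.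
-/

open Filter Topology Metric

lemma tendsto_norm_atTop_of_double_pole {f g : ℂ → ℂ} {p : ℂ} {ε : ℝ} (hε : 0 < ε)
    (hg : DifferentiableOn ℂ g (ball p ε))
    (hfg : ∀ x ∈ ball p ε, x ≠ p → f x = g x - 1 / (x - p) ^ 2) :
    Tendsto (fun x => ‖f x‖) (𝓝[≠] p) atTop := by
  have hgc : ContinuousAt g p := (hg.differentiableAt (ball_mem_nhds p hε)).continuousAt
  have h1 : Tendsto (fun x : ℂ => (x - p) ^ 2) (𝓝[≠] p) (𝓝[≠] 0) := by
    refine tendsto_nhdsWithin_iff.2 ⟨?_, ?_⟩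
    · have : ContinuousAt (fun x : ℂ => (x - p) ^ 2) p := by fun_prop
      have h := this.tendsto.mono_left (nhdsWithin_le_nhds (s := {p}ᶜ))
      simpa using h
    · filter_upwards [self_mem_nhdsWithin] with x hx
      exact pow_ne_zero 2 (sub_ne_zero.2 hx)
  have h2 : Tendsto (fun x : ℂ => ‖((x - p) ^ 2)⁻¹‖) (𝓝[≠] p) atTop :=
    tendsto_norm_cobounded_atTop.comp (tendsto_inv₀_nhdsNE_zero.comp h1)
  have h3 : Tendsto (fun x => -‖g x‖) (𝓝[≠] p) (𝓝 (-‖g p‖)) :=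
    (hgc.norm.neg.tendsto).mono_left nhdsWithin_le_nhds
  refine tendsto_atTop_mono' _ ?_ (h2.atTop_add h3)
  filter_upwards [self_mem_nhdsWithin, nhdsWithin_le_nhds (ball_mem_nhds p hε)] with x hx hxb
  rw [hfg x hxb hx, one_div, norm_sub_rev]
  have := norm_sub_norm_le (((x - p) ^ 2)⁻¹) (g x)
  linarith

/-- The pole set has no accumulation point in `U`: near a pole `p` the function
`g - 1/(x - p)²` is continuous off `p`, and near a point of `U \ S` the values of `f` on `U \ S`
are bounded; in both cases `f` cannot blow up at nearby points of `S`. -/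
lemma eventually_notMem_poles {U : Set ℂ} (hU : IsOpen U) {f : ℂ → ℂ} {S : Set ℂ}
    (hf : DifferentiableOn ℂ f (U \ S))
    (hpoles : ∀ p ∈ S, ∃ ε > 0, ∃ g : ℂ → ℂ,
      DifferentiableOn ℂ g (ball p ε) ∧
      ∀ x ∈ ball p ε, x ≠ p → f x = g x - 1 / (x - p) ^ 2)
    {x : ℂ} (hx : x ∈ U) : ∀ᶠ y in 𝓝[≠] x, y ∉ S := by
  have hinf : ∀ p ∈ S, Tendsto (fun x => ‖f x‖) (𝓝[≠] p) atTop := fun p hp => by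
    obtain ⟨ε, hε, g, hg, hfg⟩ := hpoles p hp
    exact tendsto_norm_atTop_of_double_pole hε hg hfg
  have hiso : ∀ p ∈ S, ∀ᶠ y in 𝓝[≠] p, y ∉ S := by
    intro p hp
    obtain ⟨ε, hε, g, hg, hfg⟩ := hpoles p hp
    filter_upwards [self_mem_nhdsWithin, nhdsWithin_le_nhds (ball_mem_nhds p hε)] with y hy hyb hyS
    have hyp : y - p ≠ 0 := sub_ne_zero.2 hy
    have hgy : DifferentiableAt ℂ g y := hg.differentiableAt (isOpen_ball.mem_nhds hyb)
    have hc : ContinuousAt (fun x => g x - 1 / (x - p) ^ 2) y :=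
      hgy.continuousAt.sub (continuousAt_const.div (by fun_prop) (pow_ne_zero 2 hyp))
    have ht : Tendsto (fun x => ‖f x‖) (𝓝[≠] y) (𝓝 ‖g y - 1 / (y - p) ^ 2‖) := by
      refine (hc.norm.tendsto.mono_left nhdsWithin_le_nhds).congr' ?_
      filter_upwards [nhdsWithin_le_nhds (isOpen_ball.mem_nhds hyb),
        nhdsWithin_le_nhds (isOpen_ne.mem_nhds hy)] with z hz hzp
      rw [hfg z hz hzp]
    exact not_tendsto_nhds_of_tendsto_atTop (hinf y hyS) _ ht
  by_cases hxS : x ∈ S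
  · exact hiso x hxS
  have hcont : ContinuousWithinAt f (U \ S) x := (hf x ⟨hx, hxS⟩).continuousWithinAt
  have hb : ∀ᶠ y in 𝓝 x, y ∈ U \ S → ‖f y‖ < ‖f x‖ + 1 :=
    eventually_nhdsWithin_iff.1
      (hcont.norm.tendsto.eventually (gt_mem_nhds (lt_add_one ‖f x‖)))
  refine nhdsWithin_le_nhds ?_
  filter_upwards [hb.eventually_nhds, hU.mem_nhds hx] with y hy hyU hyS
  have hy' : ∀ᶠ z in 𝓝[≠] y, z ∈ U \ S → ‖f z‖ < ‖f x‖ + 1 := nhdsWithin_le_nhds hy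
  have hyU' : ∀ᶠ z in 𝓝[≠] y, z ∈ U := nhdsWithin_le_nhds (hU.mem_nhds hyU)
  obtain ⟨z, hz1, hz2, hz3, hz4⟩ := (hy'.and ((hiso y hyS).and
    (((hinf y hyS).eventually_ge_atTop (‖f x‖ + 1)).and hyU'))).exists
  exact absurd (hz1 ⟨hz4, hz2⟩) (not_lt.2 hz3)

/-- Subtracting the principal parts of the finitely many poles in the disc leaves a function
holomorphic on the closed disc. -/
lemma exists_holomorphic_part {U : Set ℂ} (hU : IsOpen U) {f : ℂ → ℂ} {S : Set ℂ}
    (hf : DifferentiableOn ℂ f (U \ S))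
    (hpoles : ∀ p ∈ S, ∃ ε > 0, ∃ g : ℂ → ℂ,
      DifferentiableOn ℂ g (ball p ε) ∧
      ∀ x ∈ ball p ε, x ≠ p → f x = g x - 1 / (x - p) ^ 2)
    {c : ℂ} {R : ℝ} (hcU : closedBall c R ⊆ U) (T : Finset ℂ)
    (hT : ∀ x, x ∈ T ↔ x ∈ S ∩ closedBall c R) :
    ∃ h : ℂ → ℂ, (∀ x ∈ closedBall c R, DifferentiableAt ℂ h x) ∧
      ∀ x, x ∉ T → h x = f x + ∑ q ∈ T, ((x - q) ^ 2)⁻¹ := by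
  classical
  choose! ε hε g hg hfg using hpoles
  -- At `x ∈ T` the term `q = x` of the sum is the junk value `0⁻¹ = 0`, so `h x` is the limit
  -- of `f + ∑ ((x - q) ^ 2)⁻¹` there.
  refine ⟨fun x => (if x ∈ T then g x x else f x) + ∑ q ∈ T, ((x - q) ^ 2)⁻¹, ?_, ?_⟩
  · intro x hx
    have hdisc : ∀ᶠ y in 𝓝[≠] x, y ∉ S :=
      eventually_notMem_poles hU hf (fun p hp => ⟨ε p, hε p hp, g p, hg p hp, hfg p hp⟩) (hcU hx)
    have hsum : ∀ V : Finset ℂ, x ∉ V →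
        DifferentiableAt ℂ (fun y => ∑ q ∈ V, ((y - q) ^ 2)⁻¹) x := by
      intro V hV
      refine DifferentiableAt.fun_sum fun q hq => ?_
      have : x - q ≠ 0 := sub_ne_zero.2 fun h => hV (h ▸ hq)
      exact DifferentiableAt.inv (by fun_prop) (pow_ne_zero 2 this)
    by_cases hxT : x ∈ T
    · have hxS : x ∈ S := ((hT x).1 hxT).1
      have hgd : DifferentiableAt ℂ (g x) x :=
        (hg x hxS).differentiableAt (ball_mem_nhds x (hε x hxS))
      refine (hgd.add (hsum (T.erase x) (Finset.notMem_erase x T))).congr_of_eventuallyEq ?_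
      filter_upwards [eventually_nhdsWithin_iff.1 hdisc, ball_mem_nhds x (hε x hxS)] with y hy hyb
      rw [Pi.add_apply, ← Finset.add_sum_erase T _ hxT]
      by_cases hyx : y = x
      · subst hyx
        simp [hxT]
      · have hyT : y ∉ T := fun h => hy hyx ((hT y).1 h).1
        rw [if_neg hyT, hfg x hxS y hyb hyx]
        ring
    · have hxS : x ∉ S := fun h => hxT ((hT x).2 ⟨h, hx⟩)
      have hev : ∀ᶠ y in 𝓝 x, y ∉ S := by
        filter_upwards [eventually_nhdsWithin_iff.1 hdisc] with y hy
        by_cases hyx : y = x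
        · rwa [hyx]
        · exact hy hyx
      have hfd : DifferentiableAt ℂ f x :=
        hf.differentiableAt (inter_mem (hU.mem_nhds (hcU hx)) hev)
      refine (hfd.add (hsum T hxT)).congr_of_eventuallyEq ?_
      filter_upwards [hev] with y hy
      have hyT : y ∉ T := fun h => hy ((hT y).1 h).1
      rw [Pi.add_apply, if_neg hyT]
  · intro x hx
    simp [hx]

lemma circleIntegral_inv_sq_mul {w : ℂ → ℂ} (hw : Differentiable ℂ w) {c q : ℂ} {R : ℝ}
    (hq : q ∈ ball c R) :
    (∮ z in C(c, R), ((z - q) ^ 2)⁻¹ * w z) = 2 * Real.pi * Complex.I * deriv w q := by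
  have h := Complex.two_pi_I_inv_smul_circleIntegral_sub_sq_inv_smul_of_differentiable
    isOpen_univ (Set.subset_univ (closedBall c R)) hw.differentiableOn hq
  have h0 : (2 * Real.pi * Complex.I : ℂ) ≠ 0 := Complex.two_pi_I_ne_zero
  rw [← h]
  simp only [smul_eq_mul]
  rw [mul_inv_cancel_left₀ h0]

/-- Residue estimate: if `f` is the holomorphic `h` minus double poles at the points of `T`, and it
differs from `-1/(x - c)²` plus the holomorphic `E` by at most `δ` on the circle, then testing
against `w` compares `∑_{q ∈ T} w'(q)` with `w'(c)`. -/
lemma norm_deriv_sub_sum_le {w h E f : ℂ → ℂ} (hw : Differentiable ℂ w) {c : ℂ} {R δ M : ℝ}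
    (hR : 0 < R) (hh : ∀ x ∈ closedBall c R, DifferentiableAt ℂ h x) (hE : Differentiable ℂ E)
    (T : Finset ℂ) (hT : ∀ q ∈ T, q ∈ ball c R)
    (hfh : ∀ x ∈ sphere c R, h x = f x + ∑ q ∈ T, ((x - q) ^ 2)⁻¹)
    (hδ : ∀ x ∈ sphere c R, ‖f x - (-1 / (x - c) ^ 2 + E x)‖ ≤ δ)
    (hM : ∀ x ∈ sphere c R, ‖w x‖ ≤ M) (hM0 : 0 ≤ M) :
    ‖deriv w c - ∑ q ∈ T, deriv w q‖ ≤ R * (M * δ) := by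
  have hci : ∀ q ∈ ball c R, CircleIntegrable (fun z => ((z - q) ^ 2)⁻¹ * w z) c R := by
    intro q hq
    refine ContinuousOn.circleIntegrable hR.le ?_
    refine ContinuousOn.mul (ContinuousOn.inv₀ (by fun_prop) fun z hz => ?_)
      hw.continuous.continuousOn
    refine pow_ne_zero 2 (sub_ne_zero.2 ?_)
    rintro rfl
    exact absurd (mem_sphere.1 hz) (mem_ball.1 hq).ne
  have hd : ∀ x ∈ closedBall c R, DifferentiableAt ℂ (fun z => (h z - E z) * w z) x :=
    fun x hx => ((hh x hx).sub (hE x)).mul (hw x)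
  have hc0 : ContinuousOn (fun z => (h z - E z) * w z) (closedBall c R) :=
    fun x hx => (hd x hx).continuousAt.continuousWithinAt
  have hz : (∮ z in C(c, R), (h z - E z) * w z) = 0 :=
    Complex.circleIntegral_eq_zero_of_differentiable_on_off_countable hR.le Set.countable_empty hc0
      fun x hx => hd x (ball_subset_closedBall hx.1)
  have hci0 : CircleIntegrable (fun z => (h z - E z) * w z) c R :=
    (hc0.mono sphere_subset_closedBall).circleIntegrable hR.le
  have hcc : c ∈ ball c R := mem_ball_self hR
  have hsumi : CircleIntegrable (fun z => ∑ q ∈ T, ((z - q) ^ 2)⁻¹ * w z) c R :=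
    CircleIntegrable.fun_sum T fun q hq => hci q (hT q hq)
  have key : (∮ z in C(c, R), (f z - (-1 / (z - c) ^ 2 + E z)) * w z) =
      2 * Real.pi * Complex.I * (deriv w c - ∑ q ∈ T, deriv w q) := by
    have e1 : (∮ z in C(c, R), (f z - (-1 / (z - c) ^ 2 + E z)) * w z) =
        ∮ z in C(c, R), ((h z - E z) * w z + ((z - c) ^ 2)⁻¹ * w z) -
          ∑ q ∈ T, ((z - q) ^ 2)⁻¹ * w z := by
      refine circleIntegral.integral_congr hR.le fun z hz => ?_
      rw [← Finset.sum_mul, hfh z hz]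
      ring
    have hadd : CircleIntegrable (fun z => (h z - E z) * w z + ((z - c) ^ 2)⁻¹ * w z) c R :=
      hci0.add (hci c hcc)
    rw [e1, circleIntegral.integral_sub hadd hsumi,
      circleIntegral.integral_add hci0 (hci c hcc), hz, zero_add,
      circleIntegral_inv_sq_mul hw hcc,
      circleIntegral.integral_fun_sum fun q hq => hci q (hT q hq),
      Finset.sum_congr rfl fun q hq => circleIntegral_inv_sq_mul hw (hT q hq),
      ← Finset.mul_sum, mul_sub]
  have hle : ‖∮ z in C(c, R), (f z - (-1 / (z - c) ^ 2 + E z)) * w z‖ ≤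
      2 * Real.pi * R * (M * δ) := by
    refine circleIntegral.norm_integral_le_of_norm_le_const hR.le fun z hz => ?_
    rw [norm_mul, mul_comm]
    exact mul_le_mul (hM z hz) (hδ z hz) (norm_nonneg _) hM0
  rw [key, norm_mul] at hle
  have hn : ‖(2 * Real.pi * Complex.I : ℂ)‖ = 2 * Real.pi := by
    simp [abs_of_pos Real.pi_pos]
  rw [hn, mul_assoc (2 * Real.pi)] at hle
  exact le_of_mul_le_mul_left hle (by positivity)

/-- Let `f` be meromorphic on an open set `U` containing the closed disc
`|x - x₀| ≤ 7/10` — i.e. `f` is holomorphic on `U` off its pole set `S`, where every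
`p ∈ S` is a double pole with principal part `-1/(x-p)²` (`f(x) + 1/(x-p)²` extends
holomorphically near `p`) — with no poles on the circle `|x - x₀| = 7/10`. If
`sup_{|ζ|=7/10} |f(x₀+ζ) - Y₀(ζ)| ≤ 2.35×10⁻⁵`, then `f` has exactly one pole `p` in the
open disc `|x - x₀| < 7/10`, and every such pole satisfies `|p - x₀| ≤ 4.1×10⁻⁶`. -/
theorem statement19 (x₀ : ℝ) (hx₀ : x₀ = -770766/323285) (r : ℝ) (hr : r = 7/10)
    (a : ℕ → ℝ)
    (h0 : a 0 = -x₀ / 10) (h1 : a 1 = -1/6) (h2 : a 2 = 19949/321055) (h3 : a 3 = 0)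
    (hrec : ∀ n, 4 ≤ n → n ≤ 17 →
      a n = -(6 / (((n : ℝ) + 5) * ((n : ℝ) - 2))) *
        ∑ k ∈ Finset.range (n - 4 + 1), a k * a (n - 4 - k))
    (Y₀ : ℂ → ℂ)
    (hY₀ : ∀ ζ : ℂ, Y₀ ζ = -1 / ζ ^ 2 + ζ ^ 2 * ∑ n ∈ Finset.range 18, (a n : ℂ) * ζ ^ n)
    (U : Set ℂ) (hUopen : IsOpen U)
    (hUdisc : Metric.closedBall (x₀ : ℂ) (7/10) ⊆ U)
    (f : ℂ → ℂ) (S : Set ℂ) (hSU : S ⊆ U)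
    (hnopole : S ∩ Metric.sphere (x₀ : ℂ) (7/10) = ∅)
    (hf : DifferentiableOn ℂ f (U \ S))
    (hpoles : ∀ p ∈ S, ∃ ε > 0, ∃ g : ℂ → ℂ,
      DifferentiableOn ℂ g (Metric.ball p ε) ∧
      ∀ x ∈ Metric.ball p ε, x ≠ p → f x = g x - 1 / (x - p) ^ 2)
    (hbound : ∀ ζ : ℂ, ‖ζ‖ = 7/10 → ‖f ((x₀ : ℂ) + ζ) - Y₀ ζ‖ ≤ 2.35e-5) :
    (∃! p : ℂ, p ∈ S ∩ Metric.ball (x₀ : ℂ) (7/10)) ∧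
    (∀ p ∈ S ∩ Metric.ball (x₀ : ℂ) (7/10), ‖p - (x₀ : ℂ)‖ ≤ 4.1e-6) := by
  set c : ℂ := (x₀ : ℂ) with hc
  have hfin : (S ∩ closedBall c (7/10)).Finite := by
    by_contra hinf
    obtain ⟨x, hxK, hacc⟩ := Set.Infinite.exists_accPt_of_subset_isCompact hinf
      (isCompact_closedBall c (7/10)) Set.inter_subset_right
    refine (accPt_iff_frequently_nhdsNE.1 hacc) ?_
    filter_upwards [eventually_notMem_poles hUopen hf hpoles (hUdisc hxK)] with y hy hyS
    exact hy hyS.1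
  set T : Finset ℂ := hfin.toFinset with hTdef
  have hT : ∀ x, x ∈ T ↔ x ∈ S ∩ closedBall c (7/10) := fun x => hfin.mem_toFinset
  have hTs : ∀ x ∈ sphere c (7/10), x ∉ T := fun x hx hxT =>
    Set.eq_empty_iff_forall_notMem.1 hnopole x ⟨((hT x).1 hxT).1, hx⟩
  have hTb : ∀ q ∈ T, q ∈ ball c (7/10) := fun q hq =>
    lt_of_le_of_ne ((hT q).1 hq).2 fun h => hTs q h hq
  have hT' : ∀ x, x ∈ T ↔ x ∈ S ∩ ball c (7/10) := fun x =>
    ⟨fun h => ⟨((hT x).1 h).1, hTb x h⟩, fun h => (hT x).2 ⟨h.1, ball_subset_closedBall h.2⟩⟩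
  obtain ⟨h, hh, hfh⟩ := exists_holomorphic_part hUopen hf hpoles hUdisc T hT
  have hE : Differentiable ℂ
      (fun x : ℂ => (x - c) ^ 2 * ∑ n ∈ Finset.range 18, (a n : ℂ) * (x - c) ^ n) := by
    fun_prop
  have hδ : ∀ x ∈ sphere c (7/10), ‖f x - (-1 / (x - c) ^ 2 +
      (x - c) ^ 2 * ∑ n ∈ Finset.range 18, (a n : ℂ) * (x - c) ^ n)‖ ≤ 2.35e-5 := by
    intro x hx
    have := hbound (x - c) (mem_sphere_iff_norm.1 hx)
    rwa [hY₀, add_sub_cancel] at this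
  have hmain : ∀ k : ℕ, ‖deriv (fun x : ℂ => (x - c) ^ k) c -
      ∑ q ∈ T, deriv (fun x : ℂ => (x - c) ^ k) q‖ ≤ 7/10 * ((7/10) ^ k * 2.35e-5) := by
    intro k
    refine norm_deriv_sub_sum_le (by fun_prop) (by norm_num) hh hE T hTb
      (fun x hx => hfh x (hTs x hx)) hδ (fun x hx => ?_) (by positivity)
    rw [norm_pow, mem_sphere_iff_norm.1 hx]
  have hcard : T.card = 1 := by
    have h1 := hmain 1
    simp only [pow_one, deriv_sub_const, deriv_id'', Finset.sum_const, nsmul_eq_mul, mul_one] at h1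
    have h2 : ((1 : ℂ) - T.card) = (((1 - T.card : ℤ) : ℝ) : ℂ) := by push_cast; ring
    rw [h2, Complex.norm_real, Real.norm_eq_abs] at h1
    have h3 : |((1 - T.card : ℤ) : ℝ)| < 1 := lt_of_le_of_lt h1 (by norm_num)
    have h4 : |(1 - T.card : ℤ)| < 1 := by exact_mod_cast h3
    have := Int.abs_lt_one_iff.1 h4
    omega
  obtain ⟨p, hp⟩ := Finset.card_eq_one.1 hcard
  have huniq : ∀ y, y ∈ S ∩ ball c (7/10) ↔ y = p := fun y => by
    rw [← hT', hp, Finset.mem_singleton]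
  refine ⟨⟨p, (huniq p).2 rfl, fun y hy => (huniq y).1 hy⟩, fun y hy => ?_⟩
  rw [(huniq y).1 hy]
  have hder : ∀ q : ℂ, deriv (fun x : ℂ => (x - c) ^ 2) q = 2 * (q - c) := fun q => by simp
  have h2 := hmain 2
  rw [hp, Finset.sum_singleton, hder, hder, sub_self, mul_zero, zero_sub, norm_neg, norm_mul,
    Complex.norm_ofNat] at h2
  norm_num at h2 ⊢
  linarith
end
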